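/- Let I be an ideal in ℤ[x₁,…,xₙ] with I ∩ ℤ = ⟨0⟩ and suppose h ∈ ℤ is nonzero and satisfies (I : h^∞) = I·ℚ[x₁,…,xₙ] ∩ ℤ[x₁,…,xₙ]. Then every prime ideal P that is minimal over I satisfies either P ∩ ℤ = ⟨0⟩ (in which case P contains I : h^∞) or h ∈ P. -/

import Mathlib

open MvPolynomial

/-- The saturation `I : h^∞ = ⋃ k, (I : h^k)`. -/
def Ideal.sat {A : Type*} [CommRing A] (I : Ideal A) (h : A) : Ideal A :=
  ⨆ k : ℕ, I.colon (Ideal.span {h ^ k})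

theorem exists_mul_pow_mem_aux {A : Type*} [CommRing A] {I P : Ideal A}
    (hP : P ∈ I.minimalPrimes) {a : A} (ha : a ∈ P) :
    ∃ s ∉ P, ∃ k : ℕ, s * a ^ k ∈ I := by
  have hPp : P.IsPrime := hP.1.1
  by_contra hcon
  push Not at hcon
  have hdis : Disjoint (I : Set A) ((P.primeCompl ⊔ Submonoid.powers a : Submonoid A) : Set A) := by
    rw [Set.disjoint_left]
    intro x hx hxS
    obtain ⟨s, hs, t, ⟨k, rfl⟩, rfl⟩ := Submonoid.mem_sup.mp hxS
    exact hcon s hs k hx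
  obtain ⟨Q, hQ, hIQ, hQd⟩ := Ideal.exists_le_prime_disjoint I _ hdis
  have hQP : Q ≤ P := by
    intro x hx
    by_contra hxP
    exact Set.disjoint_left.mp hQd hx (Submonoid.mem_sup_left (show x ∈ P.primeCompl from hxP))
  have hPQ : P ≤ Q := hP.2 ⟨hQ, hIQ⟩ hQP
  exact Set.disjoint_left.mp hQd (hPQ ha) (Submonoid.mem_sup_right (Submonoid.mem_powers a))

theorem stmt_17 (n : ℕ) (I : Ideal (MvPolynomial (Fin n) ℤ))
    (hI : ∀ a : ℤ, (C a : MvPolynomial (Fin n) ℤ) ∈ I → a = 0)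
    (h : ℤ) (hh : h ≠ 0)
    (hsat : I.sat (C h) =
      Ideal.comap (MvPolynomial.map (Int.castRingHom ℚ))
        (Ideal.map (MvPolynomial.map (Int.castRingHom ℚ)) I)) :
    ∀ P ∈ I.minimalPrimes,
      ((∀ a : ℤ, (C a : MvPolynomial (Fin n) ℤ) ∈ P → a = 0) ∧ I.sat (C h) ≤ P) ∨
      (C h : MvPolynomial (Fin n) ℤ) ∈ P := by
  intro P hP
  have hPp : P.IsPrime := hP.1.1
  by_cases hhP : (C h : MvPolynomial (Fin n) ℤ) ∈ P
  · exact Or.inr hhP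
  left
  have hle : I.sat (C h) ≤ P := by
    refine iSup_le fun k f hf => ?_
    rw [Ideal.mem_colon_span_singleton] at hf
    exact (hPp.mem_or_mem (hP.1.2 hf)).resolve_right fun hk => hhP (hPp.mem_of_pow_mem k hk)
  refine ⟨fun a ha => ?_, hle⟩
  by_contra ha0
  obtain ⟨s, hs, k, hsk⟩ := exists_mul_pow_mem_aux hP ha
  apply hs
  apply hle
  rw [hsat, Ideal.mem_comap]
  have h1 := Ideal.mem_map_of_mem (MvPolynomial.map (Int.castRingHom ℚ)) hsk
  have h2 := Ideal.mul_mem_right (C (((a : ℚ) ^ k)⁻¹)) _ h1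
  have h3 : (a : ℚ) ^ k ≠ 0 := pow_ne_zero _ (Int.cast_ne_zero.mpr ha0)
  rw [map_mul, map_pow, MvPolynomial.map_C, mul_assoc, ← C_pow, ← C_mul, eq_intCast,
    mul_inv_cancel₀ h3, C_1, mul_one] at h2
  exact h2
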